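/- Let F be a field of characteristic not 2 and let M be the generic 2×3 matrix with entries x_{ij} over R = F[x_{ij} : i=1,2, j=1,2,3]. Then the ideal P_2(M) generated by the three 2×2 subpermanents of M is a radical ideal. -/

import Mathlib

open MvPolynomial

/-!
Setting a set of variables to zero is an idempotent ring endomorphism, and any two of these commute.
If they send an ideal `I` into itself, then modulo `I` a polynomial whose images lie in `I` may be
replaced by one all of whose monomials meet each of the sets. For the ideal `P₂(M)` take the rows
and the columns of `M`. Killing a row kills all subpermanents; killing a column leaves exactly one,
and a single subpermanent generates a radical ideal because its leading monomial is squarefree for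
any monomial order. Finally, a monomial meeting both rows and all three columns is divisible by some
`x_{ri} x_{rj} x_{tk}` with `r ≠ t` and `i, j, k` distinct, and twice this product is in `P₂(M)`.
-/

theorem exists_sub_mem_of_forall_map_mem {ι G H E : Type*} [AddCommGroup G] [SetLike H G]
    [AddSubgroupClass H G] [FunLike E G G] [AddMonoidHomClass E G G] {N : H} {κ : ι → E}
    (idem : ∀ i x, κ i (κ i x) = κ i x) (comm : ∀ i j x, κ i (κ j x) = κ j (κ i x))
    (stable : ∀ i, ∀ x ∈ N, κ i x ∈ N) {x : G} (hx : ∀ i, κ i x ∈ N) (s : Finset ι) :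
    ∃ y, x - y ∈ N ∧ ∀ i ∈ s, κ i y = 0 := by
  classical
  induction s using Finset.induction_on with
  | empty => exact ⟨x, by simp [zero_mem], by simp⟩
  | insert i s _ ih =>
    obtain ⟨y, hxy, hy⟩ := ih
    have hiy : κ i y ∈ N := by
      simpa only [map_sub, sub_sub_cancel] using sub_mem (hx i) (stable i _ hxy)
    have hxy' : x - (y - κ i y) ∈ N := by
      simpa only [sub_sub_eq_add_sub, sub_add_eq_add_sub] using add_mem hxy hiy
    refine ⟨y - κ i y, hxy', fun j hj => ?_⟩
    rcases Finset.mem_insert.1 hj with rfl | hj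
    · rw [map_sub, idem, sub_self]
    · rw [map_sub, comm, hy j hj, map_zero, sub_self]

section KillVars

variable {σ : Type*}

section CommSemiring

variable {R : Type*} [CommSemiring R]

/-- The endomorphism of the polynomial ring that sets the variables in `S` to zero and fixes the
others. -/
noncomputable def killVars (S : Set σ) : MvPolynomial σ R →ₐ[R] MvPolynomial σ R :=
  aeval (Sᶜ.indicator X)

theorem killVars_X_of_mem {S : Set σ} {v : σ} (hv : v ∈ S) :
    killVars S (X v : MvPolynomial σ R) = 0 := by
  simp [killVars, hv]

theorem killVars_X_of_notMem {S : Set σ} {v : σ} (hv : v ∉ S) :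
    killVars S (X v : MvPolynomial σ R) = X v := by
  simp [killVars, hv]

theorem killVars_killVars (S T : Set σ) (f : MvPolynomial σ R) :
    killVars S (killVars T f) = killVars (S ∪ T) f := by
  suffices h : (killVars S).comp (killVars T) = killVars (R := R) (S ∪ T) from
    DFunLike.congr_fun h f
  ext1 v
  by_cases hT : v ∈ T <;> by_cases hS : v ∈ S <;>
    simp [killVars_X_of_mem, killVars_X_of_notMem, hS, hT]

end CommSemiring

variable {R : Type*} [CommRing R]

theorem sub_killVars_mem_span_X_image (S : Set σ) (f : MvPolynomial σ R) :
    f - killVars S f ∈ Ideal.span (X '' S : Set (MvPolynomial σ R)) := by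
  rw [← Ideal.Quotient.eq]
  suffices h : Ideal.Quotient.mkₐ R (Ideal.span (X '' S)) =
      (Ideal.Quotient.mkₐ R (Ideal.span (X '' S))).comp (killVars S) from DFunLike.congr_fun h f
  ext1 v
  by_cases hv : v ∈ S
  · simpa [killVars_X_of_mem hv, Ideal.Quotient.eq_zero_iff_mem] using
      Ideal.subset_span (Set.mem_image_of_mem X hv)
  · simp [killVars_X_of_notMem hv]

theorem exists_ne_zero_of_killVars_eq_zero {S : Set σ} {f : MvPolynomial σ R}
    (hf : killVars S f = 0) {e : σ →₀ ℕ} (he : e ∈ f.support) : ∃ v ∈ S, e v ≠ 0 := by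
  have hmem := sub_killVars_mem_span_X_image S f
  rw [hf, sub_zero] at hmem
  exact mem_ideal_span_X_image.1 hmem e he

theorem isRadical_of_isRadical_map_killVars {ι : Type*} [Finite ι] {I : Ideal (MvPolynomial σ R)}
    (S : ι → Set σ) (map_le : ∀ i, I.map (killVars (S i)) ≤ I)
    (map_isRadical : ∀ i, (I.map (killVars (S i))).IsRadical)
    (monomial_mem : ∀ e : σ →₀ ℕ, (∀ i, ∃ v ∈ S i, e v ≠ 0) → monomial e 1 ∈ I) :
    I.IsRadical := by
  rintro f ⟨n, hn⟩
  have killVars_mem (i : ι) : killVars (S i) f ∈ I := by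
    refine map_le i (map_isRadical i ⟨n, ?_⟩)
    simpa only [map_pow] using Ideal.mem_map_of_mem (killVars (S i)) hn
  have := Fintype.ofFinite ι
  obtain ⟨g, hfg, hg⟩ := exists_sub_mem_of_forall_map_mem
    (fun i p => by rw [killVars_killVars, Set.union_self])
    (fun i j p => by rw [killVars_killVars, killVars_killVars, Set.union_comm])
    (fun i p hp => map_le i (Ideal.mem_map_of_mem _ hp)) killVars_mem Finset.univ
  have g_mem : g ∈ I := by
    rw [g.as_sum]
    refine sum_mem fun e he => ?_
    rw [← mul_one (coeff e g), ← C_mul_monomial]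
    exact I.mul_mem_left _ <| monomial_mem e fun i =>
      exists_ne_zero_of_killVars_eq_zero (hg i (Finset.mem_univ i)) he
  simpa only [sub_add_cancel] using add_mem hfg g_mem

end KillVars

section SquarefreeLeadingMonomial

universe u

variable {σ R : Type*} [CommRing R]

theorem isRadical_span_singleton_of_squarefree_degree [IsReduced R] (m : MonomialOrder σ)
    {b : MvPolynomial σ R} (hb : IsUnit (m.leadingCoeff b)) (hdeg : ∀ v, m.degree b v ≤ 1) :
    (Ideal.span {b}).IsRadical := by
  rintro f ⟨n, hn⟩
  rw [Ideal.mem_span_singleton] at hn ⊢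
  obtain ⟨q, r, hf, -, hr⟩ := m.div_single hb f
  have hbfr : b ∣ f - r := ⟨q, by rw [hf, add_sub_cancel_right, mul_comm]⟩
  suffices hr0 : r = 0 by rwa [hr0, sub_zero] at hbfr
  by_contra hr0
  obtain ⟨s, hs⟩ : b ∣ r ^ n :=
    (dvd_iff_dvd_of_dvd_sub (hbfr.trans (sub_dvd_pow_sub_pow f r n))).1 hn
  have hs0 : s ≠ 0 := by
    rintro rfl
    exact pow_ne_zero n hr0 (by rw [hs, mul_zero])
  have degree_eq : n • m.degree r = m.degree b + m.degree s := by
    rw [← m.degree_pow, hs, m.degree_mul_of_isRegular_left hb.isRegular hs0]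
  -- `degree b` is squarefree and divides a power of the monomial `degree r`, hence divides it.
  refine hr _ (m.degree_mem_support hr0) fun v => ?_
  have hv : n * m.degree r v = m.degree b v + m.degree s v := DFunLike.congr_fun degree_eq v
  rcases Nat.eq_zero_or_pos (m.degree r v) with h0 | hpos
  · rw [h0, mul_zero] at hv
    lia
  · exact (hdeg v).trans hpos

theorem nonempty_monomialOrder (σ : Type u) : Nonempty (MonomialOrder.{u, u} σ) := by
  obtain ⟨_, _⟩ := exists_wellFoundedLT σ
  -- `MonomialOrder.lex` needs `>` to be well-founded, hence the reversed well-order.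
  exact ⟨@MonomialOrder.lex σ (inferInstanceAs (LinearOrder σᵒᵈ))
    (inferInstanceAs (WellFoundedGT σᵒᵈ))⟩

open scoped MonomialOrder in
theorem isRadical_span_monomial_add_monomial [IsReduced R] {d e : σ →₀ ℕ} (hde : d ≠ e)
    (hd : ∀ v, d v ≤ 1) (he : ∀ v, e v ≤ 1) {a b : R} (ha : IsUnit a) (hb : IsUnit b) :
    (Ideal.span {monomial d a + monomial e b}).IsRadical := by
  classical
  rcases subsingleton_or_nontrivial R with _ | _
  · exact fun f _ => by simp [Subsingleton.elim f 0]
  obtain ⟨m⟩ := nonempty_monomialOrder σ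
  wlog hlt : e ≺[m] d generalizing d e a b
  · rw [add_comm]
    exact this hde.symm he hd hb ha (lt_of_le_of_ne (not_lt.1 hlt) (m.toSyn.injective.ne hde))
  have degree_lt : m.degree (monomial e b) ≺[m] m.degree (monomial d a) := by
    rwa [m.degree_monomial, m.degree_monomial, if_neg ha.ne_zero, if_neg hb.ne_zero]
  apply isRadical_span_singleton_of_squarefree_degree m
  · rwa [m.leadingCoeff_add_of_lt degree_lt, m.leadingCoeff_monomial]
  · rwa [m.degree_add_of_lt degree_lt, m.degree_monomial, if_neg ha.ne_zero]

end SquarefreeLeadingMonomial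

theorem prod_X_dvd_monomial {σ R : Type*} [CommSemiring R] {s : Finset σ} {e : σ →₀ ℕ}
    (h : ∀ v ∈ s, e v ≠ 0) (a : R) : ∏ v ∈ s, X v ∣ monomial e a := by
  have hs : s ⊆ e.support := fun v hv => Finsupp.mem_support_iff.2 (h v hv)
  rw [monomial_eq]
  exact ((Finset.prod_dvd_prod_of_dvd _ _ fun v hv => dvd_pow_self _ (h v hv)).trans
    (Finset.prod_dvd_prod_of_subset _ _ _ hs)).mul_left _

section TwoRows

variable {ι : Type*}

section CommSemiring

variable {R : Type*} [CommSemiring R]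

/-- The subpermanent of the generic matrix with two rows in the columns `i` and `j`,
whose index type is left arbitrary. -/
noncomputable def subperm (R : Type*) [CommSemiring R] (i j : ι) :
    MvPolynomial (Fin 2 × ι) R :=
  X (0, i) * X (1, j) + X (1, i) * X (0, j)

/-- The ideal of all 2×2 subpermanents of the generic matrix with two rows and columns indexed
by `ι`: for three columns, the ideal `P₂(M)`. -/
noncomputable def permanentalIdeal (R ι : Type*) [CommSemiring R] :
    Ideal (MvPolynomial (Fin 2 × ι) R) :=
  Ideal.span {f | ∃ i j : ι, i ≠ j ∧ f = subperm R i j}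

theorem subperm_comm (i j : ι) : subperm R i j = subperm R j i := by
  unfold subperm
  ring

theorem subperm_mem_permanentalIdeal {i j : ι} (hij : i ≠ j) :
    subperm R i j ∈ permanentalIdeal R ι :=
  Ideal.subset_span ⟨i, j, hij, rfl⟩

theorem permanentalIdeal_eq_span_lt (R ι : Type*) [CommSemiring R] [LinearOrder ι] :
    permanentalIdeal R ι = Ideal.span {f | ∃ j l : ι, j < l ∧
      f = X (0, j) * X (1, l) + X (1, j) * X (0, l)} := by
  unfold permanentalIdeal
  congr 1 with f
  constructor
  · rintro ⟨i, j, hij, rfl⟩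
    rcases hij.lt_or_gt with h | h
    · exact ⟨i, j, h, rfl⟩
    · exact ⟨j, i, h, subperm_comm i j⟩
  · rintro ⟨i, j, hij, rfl⟩
    exact ⟨i, j, hij.ne, rfl⟩

theorem killVars_row_subperm (r : Fin 2) (i j : ι) :
    killVars (Prod.fst ⁻¹' {r}) (subperm R i j) = 0 := by
  fin_cases r <;> simp [subperm, killVars_X_of_mem]

theorem killVars_column_subperm_of_mem {i j k : ι} (h : k = i ∨ k = j) :
    killVars (Prod.snd ⁻¹' {k}) (subperm R i j) = 0 := by
  rcases h with rfl | rfl <;> simp [subperm, killVars_X_of_mem]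

theorem killVars_column_subperm_of_ne {i j k : ι} (hi : i ≠ k) (hj : j ≠ k) :
    killVars (Prod.snd ⁻¹' {k}) (subperm R i j) = subperm R i j := by
  simp [subperm, killVars_X_of_notMem, hi, hj]

theorem map_killVars_row_permanentalIdeal (r : Fin 2) :
    (permanentalIdeal R ι).map (killVars (Prod.fst ⁻¹' {r})) = ⊥ := by
  rw [permanentalIdeal, Ideal.map_span, Ideal.span_eq_bot]
  rintro _ ⟨_, ⟨i, j, -, rfl⟩, rfl⟩
  exact killVars_row_subperm r i j

theorem X_mul_X_add_X_mul_X_mem_permanentalIdeal {r t : Fin 2} (hrt : r ≠ t) {i j : ι}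
    (hij : i ≠ j) : X (r, i) * X (t, j) + X (t, i) * X (r, j) ∈ permanentalIdeal R ι := by
  have h := subperm_mem_permanentalIdeal (R := R) hij
  obtain ⟨rfl, rfl⟩ | ⟨rfl, rfl⟩ : r = 0 ∧ t = 1 ∨ r = 1 ∧ t = 0 := by lia
  · exact h
  · rwa [add_comm]

end CommSemiring

variable {R : Type*} [CommRing R]

theorem isRadical_span_subperm [IsReduced R] {i j : ι} (hij : i ≠ j) :
    (Ideal.span {subperm R i j}).IsRadical := by
  have X_mul_X (r t : Fin 2) : (X (r, i) * X (t, j) : MvPolynomial (Fin 2 × ι) R) =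
      monomial (Finsupp.single (r, i) 1 + Finsupp.single (t, j) 1) 1 := by
    simp [X, monomial_mul]
  have le_one (r t : Fin 2) (v : Fin 2 × ι) :
      (Finsupp.single (r, i) 1 + Finsupp.single (t, j) 1 : Fin 2 × ι →₀ ℕ) v ≤ 1 := by
    classical
    simp only [Finsupp.add_apply, Finsupp.single_apply]
    grind
  rw [subperm, X_mul_X, X_mul_X]
  refine isRadical_span_monomial_add_monomial (fun h => ?_) (le_one _ _) (le_one _ _)
    isUnit_one isUnit_one
  simpa [hij.symm] using DFunLike.congr_fun h (0, i)

theorem X_mul_X_mul_X_mem_permanentalIdeal (h2 : IsUnit (2 : R)) {r t : Fin 2} (hrt : r ≠ t)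
    {i j k : ι} (hij : i ≠ j) (hik : i ≠ k) (hjk : j ≠ k) :
    X (r, i) * X (r, j) * X (t, k) ∈ permanentalIdeal R ι := by
  have two_isUnit : IsUnit (2 : MvPolynomial (Fin 2 × ι) R) :=
    map_ofNat (C (σ := Fin 2 × ι) (R := R)) 2 ▸ h2.map C
  rw [← Ideal.unit_mul_mem_iff_mem _ two_isUnit]
  have expansion : (2 * (X (r, i) * X (r, j) * X (t, k)) : MvPolynomial (Fin 2 × ι) R) =
      X (r, i) * (X (r, j) * X (t, k) + X (t, j) * X (r, k)) +
        X (r, j) * (X (r, i) * X (t, k) + X (t, i) * X (r, k)) -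
        X (r, k) * (X (r, i) * X (t, j) + X (t, i) * X (r, j)) := by
    ring
  rw [expansion]
  have mul_mem (v : Fin 2 × ι) {i j : ι} (hij : i ≠ j) :=
    Ideal.mul_mem_left _ (X v) (X_mul_X_add_X_mul_X_mem_permanentalIdeal (R := R) hrt hij)
  exact sub_mem (add_mem (mul_mem _ hjk) (mul_mem _ hik)) (mul_mem _ hij)

theorem monomial_mem_permanentalIdeal (h2 : IsUnit (2 : R)) {r t : Fin 2} (hrt : r ≠ t)
    {i j k : ι} (hij : i ≠ j) (hik : i ≠ k) (hjk : j ≠ k) {e : Fin 2 × ι →₀ ℕ}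
    (hi : e (r, i) ≠ 0) (hj : e (r, j) ≠ 0) (hk : e (t, k) ≠ 0) :
    monomial e 1 ∈ permanentalIdeal R ι := by
  classical
  refine Ideal.mem_of_dvd _ ?_ (X_mul_X_mul_X_mem_permanentalIdeal h2 hrt hij hik hjk)
  have h := prod_X_dvd_monomial (s := {(r, i), (r, j), (t, k)}) (e := e) (by simp [hi, hj, hk])
    (1 : R)
  rwa [Finset.prod_insert (by simp [hij, hrt]), Finset.prod_pair (by simp [hrt]),
    ← mul_assoc] at h

end TwoRows

theorem map_killVars_column_permanentalIdeal {R : Type*} [CommSemiring R] (k : Fin 3) :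
    (permanentalIdeal R (Fin 3)).map (killVars (Prod.snd ⁻¹' {k})) =
      Ideal.span {subperm R (k + 1) (k + 2)} := by
  rw [permanentalIdeal, Ideal.map_span]
  apply le_antisymm <;> rw [Ideal.span_le]
  · rintro _ ⟨_, ⟨i, j, hij, rfl⟩, rfl⟩
    by_cases hk : k = i ∨ k = j
    · simp [killVars_column_subperm_of_mem hk]
    · push Not at hk
      apply Ideal.subset_span
      rw [Set.mem_singleton_iff]
      refine (killVars_column_subperm_of_ne hk.1.symm hk.2.symm).trans ?_
      obtain ⟨rfl, rfl⟩ | ⟨rfl, rfl⟩ : i = k + 1 ∧ j = k + 2 ∨ i = k + 2 ∧ j = k + 1 := by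
        lia
      · rfl
      · exact subperm_comm _ _
  · rw [Set.singleton_subset_iff]
    refine Ideal.subset_span ⟨_, ⟨k + 1, k + 2, by simp, rfl⟩, ?_⟩
    exact killVars_column_subperm_of_ne (by simp) (by simp)

theorem exists_two_columns_of_forall_row_of_forall_column {P : Fin 2 → Fin 3 → Prop}
    (row : ∀ r, ∃ k, P r k) (column : ∀ k, ∃ r, P r k) :
    ∃ r t k, r ≠ t ∧ P r (k + 1) ∧ P r (k + 2) ∧ P t k := by
  choose ρ hρ using column
  have constant_or_split : ∀ ρ : Fin 3 → Fin 2,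
      (∃ r, ∀ k, ρ k = r) ∨ ∃ k, ρ (k + 1) = ρ (k + 2) ∧ ρ (k + 1) ≠ ρ k := by decide
  rcases constant_or_split ρ with ⟨r, hr⟩ | ⟨k, heq, hne⟩
  · obtain ⟨k, hk⟩ := row (r + 1)
    exact ⟨r, r + 1, k, by simp, hr (k + 1) ▸ hρ (k + 1), hr (k + 2) ▸ hρ (k + 2), hk⟩
  · exact ⟨ρ (k + 1), ρ k, k, hne, hρ (k + 1), heq ▸ hρ (k + 2), hρ k⟩

theorem monomial_mem_permanentalIdeal_of_forall_row_of_forall_column {R : Type*} [CommRing R]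
    (h2 : IsUnit (2 : R)) {e : Fin 2 × Fin 3 →₀ ℕ} (row : ∀ r, ∃ k, e (r, k) ≠ 0)
    (column : ∀ k, ∃ r, e (r, k) ≠ 0) : monomial e 1 ∈ permanentalIdeal R (Fin 3) := by
  obtain ⟨r, t, k, hrt, h₁, h₂, h₃⟩ :=
    exists_two_columns_of_forall_row_of_forall_column row column
  exact monomial_mem_permanentalIdeal h2 hrt (by simp) (by simp) (by simp) h₁ h₂ h₃

theorem permanental_two_by_three_radical_general (R : Type*) [CommRing R] [IsReduced R]
    (h2 : IsUnit (2 : R)) :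
    (Ideal.span {f : MvPolynomial (Fin 2 × Fin 3) R |
        ∃ j l : Fin 3, j < l ∧
          f = X (0, j) * X (1, l) + X (1, j) * X (0, l)}).IsRadical := by
  rw [← permanentalIdeal_eq_span_lt]
  apply isRadical_of_isRadical_map_killVars
    (Sum.elim (fun r => Prod.fst ⁻¹' {r}) fun k => Prod.snd ⁻¹' {k})
  · rintro (r | k)
    · exact (map_killVars_row_permanentalIdeal r).trans_le bot_le
    · refine (map_killVars_column_permanentalIdeal k).trans_le ?_
      exact (Ideal.span_singleton_le_iff_mem _).2 (subperm_mem_permanentalIdeal (by simp))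
  · rintro (r | k)
    · rw [Sum.elim_inl, map_killVars_row_permanentalIdeal]
      exact Ideal.isRadical_bot
    · rw [Sum.elim_inr, map_killVars_column_permanentalIdeal]
      exact isRadical_span_subperm (by simp)
  · intro e he
    refine monomial_mem_permanentalIdeal_of_forall_row_of_forall_column h2 (fun r => ?_) fun k => ?_
    · simpa using he (.inl r)
    · simpa using he (.inr k)

/-- `M` is the generic 2×3 matrix with entries `x_{ij} = X (i,j)` over
`R = F[x_{ij}]`, char F ≠ 2.  The ideal `P₂(M)` generated by the three 2×2
subpermanents of `M` is radical. -/
theorem permanental_two_by_three_radical (F : Type*) [Field F] (h2 : (2 : F) ≠ 0) :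
    (Ideal.span {f : MvPolynomial (Fin 2 × Fin 3) F |
        ∃ j l : Fin 3, j < l ∧
          f = X (0, j) * X (1, l) + X (1, j) * X (0, l)}).IsRadical :=
  permanental_two_by_three_radical_general F h2.isUnit
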